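/- arXiv:2005.09253 — 3 statements merged into one kernel-verified Lean document; each statement's English description precedes it below -/
import Mathlib

section
/- Let k be a natural number and let s, ε be real numbers with 0 ≤ ε ≤ s. Let a, b : Fin k → ℝ be such that for every i, 0 ≤ a(i) ≤ s, 0 ≤ b(i) ≤ s, and |a(i) − b(i)| ≤ ε. Then |∏_{i} a(i) − ∏_{i} b(i)| ≤ s^k − (s − ε)^k. -/
/-!
By symmetry in `a` and `b` it is enough to bound `∏ a - ∏ b` from above (`prod_sub_prod_le`), which
goes by induction on the number of factors. Write `A`, `B` for the products of the
remaining factors and `D = s ^ k - (s - ε) ^ k`. If `d = a 0 - b 0 ≥ 0`, then `b 0 ≤ s - d`, so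
`a 0 * A - b 0 * B = d * A + b 0 * (A - B) ≤ d * s ^ k + (s - d) * D = s * D + d * (s - ε) ^ k`,
which is largest at `d = ε`, where it equals `s ^ (k + 1) - (s - ε) ^ (k + 1)`.
If `a 0 < b 0`, the difference is at most `a 0 * D ≤ s * D`.
-/

/-- The one-sided bound, by splitting off the factor of index `0`. -/
lemma prod_sub_prod_le (k : ℕ) (s ε : ℝ) (hε0 : 0 ≤ ε) (hεs : ε ≤ s)
    (a b : Fin k → ℝ)
    (ha : ∀ i, 0 ≤ a i ∧ a i ≤ s) (hb : ∀ i, 0 ≤ b i ∧ b i ≤ s)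
    (hab : ∀ i, |a i - b i| ≤ ε) :
    ∏ i, a i - ∏ i, b i ≤ s ^ k - (s - ε) ^ k := by
  induction k with
  | zero => simp
  | succ k ih =>
    have h := ih (fun i => a i.succ) (fun i => b i.succ) (fun i => ha _) (fun i => hb _)
      (fun i => hab _)
    have hA : ∏ i : Fin k, a i.succ ≤ s ^ k := by
      simpa using Finset.prod_le_prod (s := Finset.univ) (fun i _ => (ha (Fin.succ i)).1)
        (fun i _ => (ha (Fin.succ i)).2)
    have hB : 0 ≤ ∏ i : Fin k, b i.succ := Finset.prod_nonneg fun i _ => (hb _).1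
    have hQ : 0 ≤ (s - ε) ^ k := pow_nonneg (by linarith) k
    have hPQ : (s - ε) ^ k ≤ s ^ k := pow_le_pow_left₀ (by linarith) (by linarith) k
    obtain ⟨ha0, ha1⟩ := ha 0
    obtain ⟨hb0, -⟩ := hb 0
    have hd := (abs_le.1 (hab 0)).2
    rw [Fin.prod_univ_succ, Fin.prod_univ_succ, pow_succ, pow_succ]
    generalize ∏ i : Fin k, a i.succ = A at *
    generalize ∏ i : Fin k, b i.succ = B at *
    generalize s ^ k = P at *
    generalize (s - ε) ^ k = Q at *
    rcases le_total (b 0) (a 0) with hle | hle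
    · have h1 := mul_le_mul_of_nonneg_left hA (sub_nonneg.2 hle)
      have h2 := mul_le_mul_of_nonneg_left h hb0
      have h3 := mul_nonneg (sub_nonneg.2 ha1) (sub_nonneg.2 hPQ)
      have h4 := mul_nonneg (sub_nonneg.2 hd) hQ
      linarith
    · have h1 := mul_le_mul_of_nonneg_left h ha0
      have h2 := mul_nonneg (sub_nonneg.2 hle) hB
      have h3 := mul_nonneg (sub_nonneg.2 ha1) (sub_nonneg.2 hPQ)
      have h4 := mul_nonneg hε0 hQ
      linarith

/-- Product-perturbation inequality (quantitative core of Lemma 3 of the paper). -/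
theorem stmt5 (k : ℕ) (s ε : ℝ) (hε0 : 0 ≤ ε) (hεs : ε ≤ s)
    (a b : Fin k → ℝ)
    (ha : ∀ i, 0 ≤ a i ∧ a i ≤ s) (hb : ∀ i, 0 ≤ b i ∧ b i ≤ s)
    (hab : ∀ i, |a i - b i| ≤ ε) :
    |∏ i, a i - ∏ i, b i| ≤ s ^ k - (s - ε) ^ k :=
  abs_sub_le_iff.2 ⟨prod_sub_prod_le k s ε hε0 hεs a b ha hb hab,
    prod_sub_prod_le k s ε hε0 hεs b a hb ha fun i => abs_sub_comm (a i) (b i) ▸ hab i⟩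
end

section
/- Let k be a natural number and let s, ε be real numbers with 0 ≤ ε ≤ s. Let a : Fin k → ℝ be such that 0 ≤ a(i) ≤ s for every i. Then ∏_{i} a(i) − ∏_{i} max(a(i) − ε, 0) ≤ s^k − (s − ε)^k. -/
/-! Induction on the number of factors. Splitting off one factor, with `b` its truncated decrease
and `P`, `Q` the two remaining products, the gap is `(a 0 - b) * P + b * (P - Q)`. Each of
`a 0 - b`, `P`, `b`, `P - Q` is at most its value when all factors equal `s`, namely `ε`, `s ^ k`,
`s - ε`, `s ^ k - (s - ε) ^ k` (the last by induction), and these recombine to the claimed bound. -/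

/-- Auxiliary monotonicity claim underlying the product-perturbation inequality
used in Lemma 3 of the paper. -/
theorem stmt6 (k : ℕ) (s ε : ℝ) (hε0 : 0 ≤ ε) (hεs : ε ≤ s)
    (a : Fin k → ℝ) (ha : ∀ i, 0 ≤ a i ∧ a i ≤ s) :
    ∏ i, a i - ∏ i, max (a i - ε) 0 ≤ s ^ k - (s - ε) ^ k := by
  induction k with
  | zero => simp
  | succ k ih =>
    have hPQ := ih (fun i => a i.succ) (fun i => ha i.succ)
    have hP : ∏ i : Fin k, a i.succ ≤ s ^ k := by
      simpa using Finset.prod_le_prod (s := Finset.univ)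
        (fun (i : Fin k) _ => (ha i.succ).1) (fun i _ => (ha i.succ).2)
    have hP0 : 0 ≤ ∏ i : Fin k, a i.succ := Finset.prod_nonneg fun i _ => (ha i.succ).1
    have hD : (s - ε) ^ k ≤ s ^ k := pow_le_pow_left₀ (by linarith) (by linarith) k
    have hb0 : 0 ≤ max (a 0 - ε) 0 := le_max_right _ _
    have hbε : a 0 - max (a 0 - ε) 0 ≤ ε := by linarith [le_max_left (a 0 - ε) 0]
    have hbs : max (a 0 - ε) 0 ≤ s - ε := max_le (by linarith [(ha 0).2]) (by linarith)
    rw [Fin.prod_univ_succ, Fin.prod_univ_succ, pow_succ, pow_succ]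
    -- With `b = max (a 0 - ε) 0` and `P`, `Q` the products over the remaining indices, write
    -- `a 0 * P - b * Q = (a 0 - b) * P + b * (P - Q)` and bound the two terms separately.
    have h1 := (mul_le_mul_of_nonneg_right hbε hP0).trans (mul_le_mul_of_nonneg_left hP hε0)
    have h2 := (mul_le_mul_of_nonneg_left hPQ hb0).trans
      (mul_le_mul_of_nonneg_right hbs (sub_nonneg.2 hD))
    linarith
end

section
/- Let n ≥ 1 be a natural number, let ε ∈ (0,1), let π_max ∈ (0,1], and set s = min(1, π_max + ε) and η = s^{2n} − (s − ε)^{2n}. Let q_1, …, q_{2n} and q'_1, …, q'_{2n} be probability distributions on nonempty finite types such that for each j: q_j(a) ≤ π_max for every a, and |q'_j(a) − q_j(a)| ≤ ε for every a. Then for any choice of elements a_1, …, a_{2n} (with a_j in the domain of q_j), one has |∏_{j=1}^{2n} q'_j(a_j) − ∏_{j=1}^{2n} q_j(a_j)| ≤ η. -/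
/-!
The bound is a fact about products of real numbers in `[0, s]` that differ factor by factor by at
most `ε ≤ s`: the two products differ most when every factor of one is `s` and every factor of the
other is `s - ε`. This is proved one factor at a time (`abs_prod_sub_prod_le`, with induction step
`abs_mul_sub_mul_le`). It applies here because both `q j (a j)` and `q' j (a j)` are at most `1`
and at most `πmax + ε`.
-/

/-- Ordered version of the induction step: `x` is the larger of the two new factors, and `X`, `Y`
are the products so far, with `S`, `T` standing for `s ^ k`, `(s - ε) ^ k`. -/
lemma abs_mul_sub_mul_le_of_le {s ε x y X Y S T : ℝ} (hyx : y ≤ x) (hy : 0 ≤ y) (hx : x ≤ s)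
    (hxy : x - y ≤ ε) (hX : 0 ≤ X) (hXS : X ≤ S) (hT : 0 ≤ T) (hXY : |X - Y| ≤ S - T) :
    |x * X - y * Y| ≤ s * S - (s - ε) * T := by
  have h1 : X * (x - y) ≤ S * (x - y) := mul_le_mul_of_nonneg_right hXS (by linarith)
  have h2 : |X - Y| * y ≤ (S - T) * y := mul_le_mul_of_nonneg_right hXY hy
  have h3 : |x * X - y * Y| ≤ X * (x - y) + |X - Y| * y := by
    have e : x * X - y * Y = X * (x - y) + (X - Y) * y := by ring
    rw [e]
    refine (abs_add_le _ _).trans ?_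
    rw [abs_of_nonneg (mul_nonneg hX (sub_nonneg.2 hyx)), abs_mul, abs_of_nonneg hy]
  -- What remains is `S * x - T * y ≤ s * S - (s - ε) * T`. Since `T ≤ S`, `S * x` falls
  -- short of `s * S` by at least `T * (s - x)`, and `T * (x - y) ≤ T * ε` gives the rest.
  have hTS : 0 ≤ S - T := (abs_nonneg _).trans hXY
  have h4 : 0 ≤ (S - T) * (s - x) := mul_nonneg hTS (by linarith)
  have h5 : 0 ≤ T * (ε - (x - y)) := mul_nonneg hT (by linarith)
  linarith

lemma abs_mul_sub_mul_le {s ε x y X Y S T : ℝ} (hx : 0 ≤ x) (hxs : x ≤ s) (hy : 0 ≤ y)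
    (hys : y ≤ s) (hxy : |x - y| ≤ ε) (hX : 0 ≤ X) (hXS : X ≤ S) (hY : 0 ≤ Y) (hYS : Y ≤ S)
    (hT : 0 ≤ T) (hXY : |X - Y| ≤ S - T) :
    |x * X - y * Y| ≤ s * S - (s - ε) * T := by
  obtain ⟨h1, h2⟩ := abs_le.1 hxy
  rcases le_total y x with h | h
  · exact abs_mul_sub_mul_le_of_le h hy hxs h2 hX hXS hT hXY
  · rw [abs_sub_comm] at hXY ⊢
    exact abs_mul_sub_mul_le_of_le h hx hys (by linarith) hY hYS hT hXY

lemma abs_prod_sub_prod_le {ι : Type*} (t : Finset ι) {s ε : ℝ} (hε : ε ≤ s) (x y : ι → ℝ)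
    (hx : ∀ i, 0 ≤ x i) (hxs : ∀ i, x i ≤ s) (hy : ∀ i, 0 ≤ y i) (hys : ∀ i, y i ≤ s)
    (hxy : ∀ i, |x i - y i| ≤ ε) :
    |∏ i ∈ t, x i - ∏ i ∈ t, y i| ≤ s ^ t.card - (s - ε) ^ t.card := by
  classical
  have hpow : ∀ {u : Finset ι} (z : ι → ℝ), (∀ i, 0 ≤ z i) → (∀ i, z i ≤ s) →
      ∏ i ∈ u, z i ≤ s ^ u.card := fun z h0 hs =>
    (Finset.prod_le_prod (fun i _ => h0 i) fun i _ => hs i).trans_eq (Finset.prod_const s)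
  induction t using Finset.induction_on with
  | empty => simp
  | insert i t hi ih =>
    rw [Finset.prod_insert hi, Finset.prod_insert hi, Finset.card_insert_of_notMem hi, pow_succ',
      pow_succ']
    exact abs_mul_sub_mul_le (hx i) (hxs i) (hy i) (hys i) (hxy i)
      (Finset.prod_nonneg fun j _ => hx j)
      (hpow x hx hxs) (Finset.prod_nonneg fun j _ => hy j)
      (hpow y hy hys) (pow_nonneg (sub_nonneg.2 hε) _) ih

/-- Lemma 3 of the paper: closeness of transition probabilities of the MDPs
built from an ε-close learnt model, as products of 2n factors. -/
theorem stmt7 (n : ℕ) (hn : 1 ≤ n) (ε : ℝ) (hε : ε ∈ Set.Ioo (0:ℝ) 1)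
    (πmax : ℝ) (hπ : πmax ∈ Set.Ioc (0:ℝ) 1)
    (α : Fin (2 * n) → Type*) [∀ j, Fintype (α j)] [∀ j, Nonempty (α j)]
    (q q' : ∀ j, PMF (α j))
    (hqmax : ∀ j a, ((q j) a).toReal ≤ πmax)
    (hclose : ∀ j a, |((q' j) a).toReal - ((q j) a).toReal| ≤ ε)
    (a : ∀ j, α j) :
    |∏ j, ((q' j) (a j)).toReal - ∏ j, ((q j) (a j)).toReal| ≤
      (min 1 (πmax + ε)) ^ (2 * n) - (min 1 (πmax + ε) - ε) ^ (2 * n) := by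
  have hle1 : ∀ {β : Type _} (p : PMF β) (b : β), (p b).toReal ≤ 1 := fun p b =>
    ENNReal.toReal_le_of_le_ofReal zero_le_one (by simpa using p.coe_le_one b)
  have key := abs_prod_sub_prod_le (Finset.univ : Finset (Fin (2 * n)))
    (s := min 1 (πmax + ε)) (ε := ε)
    (le_min hε.2.le (by linarith [hπ.1]))
    (fun j => ((q' j) (a j)).toReal) (fun j => ((q j) (a j)).toReal)
    (fun j => ENNReal.toReal_nonneg)
    (fun j => le_min (hle1 _ _)
      (by linarith [(abs_le.1 (hclose j (a j))).2, hqmax j (a j)]))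
    (fun j => ENNReal.toReal_nonneg)
    (fun j => le_min (hle1 _ _) (by linarith [hε.1, hqmax j (a j)]))
    (fun j => hclose j (a j))
  simpa only [Finset.card_univ, Fintype.card_fin] using key
end
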